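/- (Theorem 4, optimality part) Let Q̄* := Q̄*_{N,k;μ} be the unique fixed point of the soft (N,k)-pessimistic Bellman operator B̄*_{N,k;μ}, and define the policy π̄*(a|s) = μ(a|s)·exp(Q̄*(s,a)/α) / (Σ_b μ(b|s)·exp(Q̄*(s,b)/α)). Then: (i) the fixed point of the regularized evaluation operator for π̄* equals Q̄*, i.e., Q̄^{π̄*}_{N,k;μ} = Q̄*; (ii) for every policy π', Q̄^{π'}_{N,k;μ}(s,a) ≤ Q̄*(s,a) for all (s,a); and hence (iii) for every probability mass function ρ0 on S, π̄* maximizes J̄(π;μ) := Σ_s ρ0(s)·( Σ_a π(a|s)·Q̄^π_{N,k;μ}(s,a) − α·KL(π(·|s)‖μ(·|s)) ) over all policies π. -/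

import Mathlib

/-- `kmin x k` is the entry in position `k` (0-indexed) of a monotone nondecreasing
sorted arrangement of the tuple `x`, i.e. the `(k+1)`-th smallest entry counted with
multiplicity. -/
noncomputable def kmin {N : ℕ} (x : Fin N → ℝ) (k : Fin N) : ℝ := x (Tuple.sort x k)

/-- A probability mass function on a finite type: nonnegative and summing to one. -/
def IsPMF {α : Type*} [Fintype α] (p : α → ℝ) : Prop :=
  (∀ a, 0 ≤ p a) ∧ ∑ a, p a = 1

/-- Sup norm `‖Q‖_∞ = max_{(s,a)} |Q(s,a)|` on `S × A → ℝ` (curried). -/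
noncomputable def supNorm {S A : Type*} [Fintype S] [Fintype A] [Nonempty S] [Nonempty A]
    (Q : S → A → ℝ) : ℝ :=
  Finset.univ.sup' Finset.univ_nonempty (fun p : S × A => |Q p.1 p.2|)

/-- The `(N,k)`-pessimistic Bellman operator (with `k` given 0-indexed as `k : Fin N`):
`(B^π_{N,k} Q)(s,a) = r(s,a) + γ · Σ_{v : Fin N → ι} (Π_j P(v_j)) ·
  kmin_k( j ↦ Σ_{s'} M(v_j)(s,a)(s') · Σ_{a'} π(a'|s') · Q(s',a') )`. -/
noncomputable def pessBellman {S A ι : Type*} [Fintype S] [Fintype A] [Fintype ι]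
    (r : S → A → ℝ) (γ : ℝ) (P : ι → ℝ) (M : ι → S → A → S → ℝ)
    (π : S → A → ℝ) (N : ℕ) (k : Fin N) (Q : S → A → ℝ) : S → A → ℝ :=
  fun s a => r s a + γ * ∑ v : Fin N → ι, (∏ j, P (v j)) *
    kmin (fun j => ∑ s', M (v j) s a s' * ∑ a', π s' a' * Q s' a') k

/-- Kullback–Leibler divergence `KL(p‖q) = Σ_a p(a)·log(p(a)/q(a))` on a finite type
(with the convention `0·log 0 = 0`, automatic here). -/
noncomputable def KLdiv {α : Type*} [Fintype α] (p q : α → ℝ) : ℝ :=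
  ∑ a, p a * Real.log (p a / q a)

/-- The soft `(N,k)`-pessimistic Bellman operator with reference policy `μ` and
coefficient `α` (with `k` given 0-indexed as `k : Fin N`):
`(B̄*_{N,k;μ} Q)(s,a) = r(s,a) + γ · Σ_{v} (Π_j P(v_j)) ·
  kmin_k( j ↦ Σ_{s'} M(v_j)(s,a)(s') · α·log Σ_{a'} μ(a'|s')·exp(Q(s',a')/α) )`. -/
noncomputable def softBellman {S A ι : Type*} [Fintype S] [Fintype A] [Fintype ι]
    (r : S → A → ℝ) (γ : ℝ) (P : ι → ℝ) (M : ι → S → A → S → ℝ)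
    (μ : S → A → ℝ) (α : ℝ) (N : ℕ) (k : Fin N) (Q : S → A → ℝ) : S → A → ℝ :=
  fun s a => r s a + γ * ∑ v : Fin N → ι, (∏ j, P (v j)) *
    kmin (fun j => ∑ s', M (v j) s a s' *
      (α * Real.log (∑ a', μ s' a' * Real.exp (Q s' a' / α)))) k

/-- The regularized `(N,k)`-pessimistic evaluation operator for policy `π`, reference
policy `μ` and coefficient `α` (with `k` given 0-indexed as `k : Fin N`):
`(B̄^π_{N,k;μ} Q)(s,a) = r(s,a) + γ · Σ_{v} (Π_j P(v_j)) ·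
  kmin_k( j ↦ Σ_{s'} M(v_j)(s,a)(s') · (Σ_{a'} π(a'|s')·Q(s',a') − α·KL(π(·|s')‖μ(·|s'))) )`. -/
noncomputable def regBellman {S A ι : Type*} [Fintype S] [Fintype A] [Fintype ι]
    (r : S → A → ℝ) (γ : ℝ) (P : ι → ℝ) (M : ι → S → A → S → ℝ)
    (π μ : S → A → ℝ) (α : ℝ) (N : ℕ) (k : Fin N) (Q : S → A → ℝ) : S → A → ℝ :=
  fun s a => r s a + γ * ∑ v : Fin N → ι, (∏ j, P (v j)) *
    kmin (fun j => ∑ s', M (v j) s a s' *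
      ((∑ a', π s' a' * Q s' a') - α * KLdiv (π s') (μ s'))) k

lemma kmin_le_add {N : ℕ} (x y : Fin N → ℝ) (c : ℝ) (h : ∀ j, x j ≤ y j + c) (k : Fin N) :
    kmin x k ≤ kmin y k + c := by
  obtain ⟨i, hi, hik⟩ : ∃ i, i ≤ k ∧ k ≤ (Tuple.sort x).symm (Tuple.sort y i) := by
    by_contra hcon
    push Not at hcon
    have hc : (Finset.Iic k).card ≤ (Finset.Iio k).card := by
      apply Finset.card_le_card_of_injOn (fun i => (Tuple.sort x).symm (Tuple.sort y i))
      · intro i hi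
        have h1 := hcon i (by simpa using hi)
        simpa using h1
      · intro a _ b _ hab
        simpa using hab
    simp at hc
  have h1 : kmin x k ≤ x (Tuple.sort y i) := by
    have := Tuple.monotone_sort x hik
    simpa [kmin] using this
  have h2 : y (Tuple.sort y i) ≤ kmin y k := Tuple.monotone_sort y hi
  linarith [h (Tuple.sort y i)]

/-- The common backup operator acting on state values. -/
noncomputable def backupOp {S A ι : Type*} [Fintype S] [Fintype ι]
    (r : S → A → ℝ) (γ : ℝ) (P : ι → ℝ) (M : ι → S → A → S → ℝ)
    (N : ℕ) (k : Fin N) (V : S → ℝ) : S → A → ℝ :=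
  fun s a => r s a + γ * ∑ v : Fin N → ι, (∏ j, P (v j)) *
    kmin (fun j => ∑ s', M (v j) s a s' * V s') k

lemma backupOp_le {S A ι : Type*} [Fintype S] [Fintype ι]
    (r : S → A → ℝ) (γ : ℝ) (hγ0 : 0 ≤ γ) (P : ι → ℝ) (hP : IsPMF P)
    (M : ι → S → A → S → ℝ) (hM : ∀ v s a, IsPMF (M v s a))
    (N : ℕ) (k : Fin N) (V W : S → ℝ) (c : ℝ) (h : ∀ s, V s ≤ W s + c) (s : S) (a : A) :
    backupOp r γ P M N k V s a ≤ backupOp r γ P M N k W s a + γ * c := by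
  have hsum : ∑ v : Fin N → ι, (∏ j, P (v j)) = 1 := by
    classical
    rw [← Fintype.prod_sum (fun (_ : Fin N) i => P i)]
    simp [hP.2]
  have key : ∑ v : Fin N → ι, (∏ j, P (v j)) *
      kmin (fun j => ∑ s', M (v j) s a s' * V s') k
      ≤ ∑ v : Fin N → ι, (∏ j, P (v j)) *
      kmin (fun j => ∑ s', M (v j) s a s' * W s') k + c := by
    calc _ ≤ ∑ v : Fin N → ι, (∏ j, P (v j)) *
        (kmin (fun j => ∑ s', M (v j) s a s' * W s') k + c) := by
          apply Finset.sum_le_sum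
          intro v _
          apply mul_le_mul_of_nonneg_left _ (Finset.prod_nonneg fun j _ => hP.1 _)
          apply kmin_le_add
          intro j
          calc _ ≤ ∑ s', M (v j) s a s' * (W s' + c) :=
                Finset.sum_le_sum fun s' _ => mul_le_mul_of_nonneg_left (h s') ((hM _ _ _).1 _)
            _ = _ := by
                simp only [mul_add, Finset.sum_add_distrib, ← Finset.sum_mul, (hM _ _ _).2, one_mul]
      _ = _ := by
          simp only [mul_add, Finset.sum_add_distrib, ← Finset.sum_mul, hsum, one_mul]
  have := mul_le_mul_of_nonneg_left key hγ0
  simp only [backupOp]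
  linarith

lemma backupOp_compare {S A ι : Type*} [Fintype S] [Fintype A] [Fintype ι]
    [Nonempty S] [Nonempty A]
    (r : S → A → ℝ) (γ : ℝ) (hγ0 : 0 ≤ γ) (hγ1 : γ < 1) (P : ι → ℝ) (hP : IsPMF P)
    (M : ι → S → A → S → ℝ) (hM : ∀ v s a, IsPMF (M v s a))
    (N : ℕ) (k : Fin N) (V W : S → ℝ) (Q R : S → A → ℝ)
    (hQ : backupOp r γ P M N k V = Q) (hR : backupOp r γ P M N k W = R)
    (h : ∀ c, (∀ s a, Q s a ≤ R s a + c) → ∀ s, V s ≤ W s + c) (s : S) (a : A) :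
    Q s a ≤ R s a := by
  obtain ⟨p, hp⟩ := Finite.exists_max (fun p : S × A => Q p.1 p.2 - R p.1 p.2)
  have h1 := h (Q p.1 p.2 - R p.1 p.2) (fun s a => by linarith [hp (s, a)])
  have h2 := backupOp_le r γ hγ0 P hP M hM N k V W _ h1 p.1 p.2
  rw [hQ, hR] at h2
  have h3 := hp (s, a)
  simp only at h3
  nlinarith

lemma value_le {A : Type*} [Fintype A] (p : A → ℝ) (hp : IsPMF p) (Q R : A → ℝ) (c d : ℝ)
    (h : ∀ a, Q a ≤ R a + c) : (∑ a, p a * Q a) - d ≤ (∑ a, p a * R a) - d + c := by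
  have : ∑ a, p a * Q a ≤ ∑ a, p a * (R a + c) :=
    Finset.sum_le_sum fun a _ => mul_le_mul_of_nonneg_left (h a) (hp.1 a)
  simp only [mul_add, Finset.sum_add_distrib, ← Finset.sum_mul, hp.2, one_mul] at this
  linarith

lemma gibbs_le {A : Type*} [Fintype A] [Nonempty A] (p μ : A → ℝ) (hp : IsPMF p)
    (hμ : ∀ a, 0 < μ a) (α : ℝ) (hα : 0 < α) (Q : A → ℝ) :
    (∑ a, p a * Q a) - α * KLdiv p μ ≤ α * Real.log (∑ a, μ a * Real.exp (Q a / α)) := by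
  set Z := ∑ a, μ a * Real.exp (Q a / α) with hZ
  have hZpos : 0 < Z :=
    Finset.sum_pos (fun a _ => mul_pos (hμ a) (Real.exp_pos _)) Finset.univ_nonempty
  have h1 : ∀ a, p a * (Q a / α) - p a * Real.log (p a / μ a) - p a * Real.log Z
      ≤ μ a * Real.exp (Q a / α) / Z - p a := by
    intro a
    have hm := hμ a
    have he := Real.exp_pos (Q a / α)
    rcases (hp.1 a).eq_or_lt with h0 | h0
    · rw [← h0]; simp; positivity
    · have hl := Real.log_le_sub_one_of_pos (x := μ a * Real.exp (Q a / α) / (p a * Z))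
        (by positivity)
      rw [Real.log_div (by positivity) (by positivity), Real.log_mul hm.ne' he.ne',
        Real.log_mul h0.ne' hZpos.ne', Real.log_exp] at hl
      rw [Real.log_div h0.ne' hm.ne']
      have h2 := mul_le_mul_of_nonneg_left hl h0.le
      have h3 : p a * (μ a * Real.exp (Q a / α) / (p a * Z) - 1)
          = μ a * Real.exp (Q a / α) / Z - p a := by field_simp
      rw [h3] at h2
      linarith
  have h2 := Finset.sum_le_sum (s := Finset.univ) fun a _ => h1 a
  simp only [Finset.sum_sub_distrib, ← Finset.sum_mul, ← Finset.sum_div, hp.2, one_mul] at h2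
  rw [← hZ, div_self hZpos.ne'] at h2
  have h3 : ∑ a, p a * Q a = α * ∑ a, p a * (Q a / α) := by
    rw [Finset.mul_sum]
    refine Finset.sum_congr rfl fun a _ => by field_simp
  rw [h3, ← mul_sub]
  apply mul_le_mul_of_nonneg_left _ hα.le
  unfold KLdiv
  linarith

lemma gibbs_eq {A : Type*} [Fintype A] [Nonempty A] (p μ : A → ℝ)
    (hμ : ∀ a, 0 < μ a) (α : ℝ) (hα : 0 < α) (Q : A → ℝ)
    (hpdef : ∀ a, p a = μ a * Real.exp (Q a / α) / ∑ b, μ b * Real.exp (Q b / α)) :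
    IsPMF p ∧
    (∑ a, p a * Q a) - α * KLdiv p μ = α * Real.log (∑ a, μ a * Real.exp (Q a / α)) := by
  set Z := ∑ a, μ a * Real.exp (Q a / α) with hZ
  have hZpos : 0 < Z :=
    Finset.sum_pos (fun a _ => mul_pos (hμ a) (Real.exp_pos _)) Finset.univ_nonempty
  have hp : IsPMF p := by
    refine ⟨fun a => ?_, ?_⟩
    · rw [hpdef]
      have := hμ a
      positivity
    · simp only [hpdef, ← Finset.sum_div]
      rw [← hZ, div_self hZpos.ne']
  refine ⟨hp, ?_⟩
  have h1 : ∀ a, p a * Real.log (p a / μ a) = p a * Q a / α - p a * Real.log Z := by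
    intro a
    have h2 : p a / μ a = Real.exp (Q a / α) / Z := by
      rw [hpdef]
      have := (hμ a).ne'
      field_simp
    rw [h2, Real.log_div (Real.exp_pos _).ne' hZpos.ne', Real.log_exp]
    ring
  simp only [KLdiv, h1, Finset.sum_sub_distrib, ← Finset.sum_mul, ← Finset.sum_div, hp.2, one_mul]
  field_simp
  ring

/-- Theorem 4, optimality part.  Let `Q̄*` be the unique fixed point of the soft
`(N,k)`-pessimistic Bellman operator `B̄*_{N,k;μ}` and let
`π̄*(a|s) = μ(a|s)·exp(Q̄*(s,a)/α) / Σ_b μ(b|s)·exp(Q̄*(s,b)/α)`.  Then: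
(i) the fixed point of the regularized evaluation operator for `π̄*` equals `Q̄*`;
(ii) for every policy `π'` the fixed point `Q̄^{π'}` satisfies `Q̄^{π'} ≤ Q̄*` pointwise;
(iii) for every initial distribution `ρ0`, `π̄*` maximizes the regularized return
`J̄(π;μ) = Σ_s ρ0(s)·(Σ_a π(a|s)·Q̄^π(s,a) − α·KL(π(·|s)‖μ(·|s)))` over all policies. -/
theorem softBellman_optimal_policy {S A ι : Type*} [Fintype S] [Fintype A] [Fintype ι]
    [Nonempty S] [Nonempty A] [Nonempty ι]
    (r : S → A → ℝ) (γ : ℝ) (hγ0 : 0 ≤ γ) (hγ1 : γ < 1)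
    (μ : S → A → ℝ) (hμ : ∀ s, IsPMF (μ s)) (hμpos : ∀ s a, 0 < μ s a)
    (α : ℝ) (hα : 0 < α)
    (P : ι → ℝ) (hP : IsPMF P)
    (M : ι → S → A → S → ℝ) (hM : ∀ v s a, IsPMF (M v s a))
    (N : ℕ) (hN : 1 ≤ N) (k : ℕ) (hk1 : 1 ≤ k) (hkN : k ≤ N)
    (Qstar : S → A → ℝ)
    (hQstar : softBellman r γ P M μ α N ⟨k - 1, by omega⟩ Qstar = Qstar)
    (πstar : S → A → ℝ)
    (hπstar : ∀ s a, πstar s a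
      = μ s a * Real.exp (Qstar s a / α) / ∑ b, μ s b * Real.exp (Qstar s b / α)) :
    -- (i) the regularized evaluation fixed point for `π̄*` equals `Q̄*`
    (∀ Qps : S → A → ℝ,
      regBellman r γ P M πstar μ α N ⟨k - 1, by omega⟩ Qps = Qps → Qps = Qstar) ∧
    -- (ii) domination of every policy's regularized fixed point
    (∀ π' : S → A → ℝ, (∀ s, IsPMF (π' s)) →
      ∀ Qp' : S → A → ℝ,
        regBellman r γ P M π' μ α N ⟨k - 1, by omega⟩ Qp' = Qp' →
        ∀ s a, Qp' s a ≤ Qstar s a) ∧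
    -- (iii) `π̄*` maximizes the regularized return `J̄(π;μ)`
    (∀ ρ0 : S → ℝ, IsPMF ρ0 →
      ∀ π : S → A → ℝ, (∀ s, IsPMF (π s)) →
      ∀ Qπ : S → A → ℝ,
        regBellman r γ P M π μ α N ⟨k - 1, by omega⟩ Qπ = Qπ →
      ∀ Qπstar : S → A → ℝ,
        regBellman r γ P M πstar μ α N ⟨k - 1, by omega⟩ Qπstar = Qπstar →
        ∑ s, ρ0 s * ((∑ a, π s a * Qπ s a) - α * KLdiv (π s) (μ s))
          ≤ ∑ s, ρ0 s * ((∑ a, πstar s a * Qπstar s a) - α * KLdiv (πstar s) (μ s))) := by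
  have hg := fun s => gibbs_eq (πstar s) (μ s) (hμpos s) α hα (Qstar s) (hπstar s)
  have hii : ∀ π' : S → A → ℝ, (∀ s, IsPMF (π' s)) →
      ∀ Qp' : S → A → ℝ,
        regBellman r γ P M π' μ α N ⟨k - 1, by omega⟩ Qp' = Qp' →
        ∀ s a, Qp' s a ≤ Qstar s a := by
    intro π' hπ' Q' hQ'
    apply backupOp_compare r γ hγ0 hγ1 P hP M hM N ⟨k - 1, by omega⟩ _ _ Q' Qstar hQ' hQstar
    intro c hc s
    have h1 := value_le (π' s) (hπ' s) (Q' s) (Qstar s) c (α * KLdiv (π' s) (μ s)) (hc s)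
    have h2 := gibbs_le (π' s) (μ s) (hπ' s) (hμpos s) α hα (Qstar s)
    linarith
  have hi : ∀ Qps : S → A → ℝ,
      regBellman r γ P M πstar μ α N ⟨k - 1, by omega⟩ Qps = Qps → Qps = Qstar := by
    intro Qps hQps
    funext s a
    apply le_antisymm (hii πstar (fun s => (hg s).1) Qps hQps s a)
    revert s a
    apply backupOp_compare r γ hγ0 hγ1 P hP M hM N ⟨k - 1, by omega⟩ _ _ Qstar Qps hQstar hQps
    intro c hc s
    have h1 := value_le (πstar s) (hg s).1 (Qstar s) (Qps s) c
      (α * KLdiv (πstar s) (μ s)) (hc s)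
    have h2 := (hg s).2
    linarith
  refine ⟨hi, hii, ?_⟩
  intro ρ0 hρ π hπ Qπ hQπ Qπs hQπs
  rw [hi Qπs hQπs]
  apply Finset.sum_le_sum
  intro s _
  apply mul_le_mul_of_nonneg_left _ (hρ.1 s)
  rw [(hg s).2]
  have h1 := value_le (π s) (hπ s) (Qπ s) (Qstar s) 0 (α * KLdiv (π s) (μ s))
    (fun a => by linarith [hii π hπ Qπ hQπ s a])
  have h2 := gibbs_le (π s) (μ s) (hπ s) (hμpos s) α hα (Qstar s)
  linarith
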